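/- arXiv:2312.15954 — 7 statements merged into one kernel-verified Lean document; each statement's English description precedes it below -/
import Mathlib

section
/- Let p be a prime, n ≥ 1, and R = ZMod (p^n). Suppose the pair (v1, v2) of vectors in ι → R contains the standard columns (C1)–(C5). Then the two-dimensional linear code M generated by v1 and v2 is a minimal code: for all c1, c2, c1', c2' ∈ R, if the codeword w' = c1' • v1 + c2' • v2 is nonzero and supp(w') ⊆ supp(c1 • v1 + c2 • v2), then there exists a ∈ R with w' = a • (c1 • v1 + c2 • v2). -/
/-!
The ring `ZMod (p ^ n)` is a chain ring: each element is associated to some `p ^ j`, so of two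
elements one divides the other, and the non-units are the multiples of `p`. The hypotheses
(C1)–(C5) provide all columns `(1, r)` and all columns `(d, 1)` with `d` a non-unit.

Let every column on which `(c1, c2)` vanishes be one on which `(c1', c2')` vanishes. If
`c1 = t * c2`, then `(c1, c2)` vanishes on the column `(1, -t)`, which forces `c1' = t * c2'`. So
both codewords are multiples of `t • v1 + v2`, with coefficients `c2` and `c2'`, and the columns
`(1, y - t)` show that every `y` is a value of `t • v1 + v2`. Testing against the non-units `y` that
annihilate `c2 ≠ 0` yields `c2 ∣ c2'` (`ZModPrimePow.dvd_of_annihilator`). Otherwise `c2 = t * c1`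
with `t` a non-unit, and the same argument runs with the columns `(y - t, 1)`, for `y` a non-unit.
-/

namespace ZModPrimePow

variable {p n : ℕ}

lemma exists_pow_dvd_dvd (hp : p.Prime) (a : ZMod (p ^ n)) :
    ∃ j ≤ n, a ∣ (p : ZMod (p ^ n)) ^ j ∧ (p : ZMod (p ^ n)) ^ j ∣ a := by
  have : NeZero (p ^ n) := ⟨pow_ne_zero _ hp.ne_zero⟩
  obtain ⟨j, hj, hg⟩ := (Nat.dvd_prime_pow hp).1 (Nat.gcd_dvd_right a.val (p ^ n))
  refine ⟨j, hj, ?_, ?_⟩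
  · -- Bézout: `p ^ j` is a combination of `a.val` and `p ^ n`, and `p ^ n = 0` in the ring.
    have h := congrArg (Int.cast : ℤ → ZMod (p ^ n)) (Nat.gcd_eq_gcd_ab a.val (p ^ n))
    have h0 : (p : ZMod (p ^ n)) ^ n = 0 := by exact_mod_cast ZMod.natCast_self (p ^ n)
    rw [hg] at h
    push_cast at h
    rw [ZMod.natCast_zmod_val, h0, zero_mul, add_zero] at h
    exact ⟨_, h⟩
  · obtain ⟨k, hk⟩ := hg ▸ Nat.gcd_dvd_left a.val (p ^ n)
    refine ⟨k, ?_⟩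
    rw [← ZMod.natCast_zmod_val a, hk]
    push_cast
    rfl

lemma dvd_total (hp : p.Prime) (a b : ZMod (p ^ n)) : a ∣ b ∨ b ∣ a := by
  obtain ⟨i, -, hi, hi'⟩ := exists_pow_dvd_dvd hp a
  obtain ⟨j, -, hj, hj'⟩ := exists_pow_dvd_dvd hp b
  rcases le_total i j with h | h
  · exact Or.inl (hi.trans ((pow_dvd_pow _ h).trans hj'))
  · exact Or.inr (hj.trans ((pow_dvd_pow _ h).trans hi'))

lemma not_isUnit_iff (hp : p.Prime) (hn : 1 ≤ n) (a : ZMod (p ^ n)) :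
    ¬ IsUnit a ↔ (p : ZMod (p ^ n)) ∣ a := by
  have : Fact (1 < p ^ n) := ⟨Nat.one_lt_pow (by lia) hp.one_lt⟩
  constructor
  · intro ha
    obtain ⟨j, -, hj, hj'⟩ := exists_pow_dvd_dvd hp a
    rcases Nat.eq_zero_or_pos j with rfl | h
    · exact absurd (isUnit_of_dvd_one (by simpa using hj)) ha
    · exact (dvd_pow_self _ h.ne').trans hj'
  · intro h ha
    -- A unit divisor `p` of `a` would make `p ^ n = 0` a unit.
    have h0 : (p : ZMod (p ^ n)) ^ n = 0 := by exact_mod_cast ZMod.natCast_self (p ^ n)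
    have := (isUnit_of_dvd_unit h ha).pow n
    rw [h0] at this
    exact not_isUnit_zero this

/-- Only annihilators divisible by `p` need to be tested, because the annihilator of `a ≠ 0`
contains no unit. -/
lemma dvd_of_annihilator (hp : p.Prime) {a b : ZMod (p ^ n)} (ha : a ≠ 0)
    (h : ∀ y, (p : ZMod (p ^ n)) ∣ y → a * y = 0 → b * y = 0) : a ∣ b := by
  have : NeZero (p ^ n) := ⟨pow_ne_zero _ hp.ne_zero⟩
  have h0 : (p : ZMod (p ^ n)) ^ n = 0 := by exact_mod_cast ZMod.natCast_self (p ^ n)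
  obtain ⟨j, hjn, hj, hj'⟩ := exists_pow_dvd_dvd hp a
  have hlt : j < n := by
    refine lt_of_le_of_ne hjn ?_
    rintro rfl
    rw [h0] at hj'
    exact ha (zero_dvd_iff.1 hj')
  have hb := h ((p : ZMod (p ^ n)) ^ (n - j)) (dvd_pow_self _ (by lia)) (by
    obtain ⟨k, rfl⟩ := hj'
    rw [mul_right_comm, ← pow_add, Nat.add_sub_cancel' hjn, h0, zero_mul])
  refine hj.trans ?_
  have hv : p ^ n ∣ b.val * p ^ (n - j) := by
    rw [← ZMod.natCast_eq_zero_iff]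
    push_cast
    rw [ZMod.natCast_zmod_val]
    exact hb
  have hv' : p ^ j ∣ b.val := by
    refine Nat.dvd_of_mul_dvd_mul_right (pow_pos hp.pos (n - j)) ?_
    rwa [← pow_add, Nat.add_sub_cancel' hjn]
  obtain ⟨k, hk⟩ := hv'
  refine ⟨k, ?_⟩
  rw [← ZMod.natCast_zmod_val b, hk]
  push_cast
  rfl

end ZModPrimePow

open ZModPrimePow in
/-- If the generator of the two-dimensional code over `ZMod (p^n)` contains
the standard columns (C1)–(C5), then the code generated by `v1, v2` is minimal. -/
theorem two_dim_code_minimal {ι : Type*} [Fintype ι] (p n : ℕ) (hp : p.Prime) (hn : 1 ≤ n)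
    (v1 v2 : ι → ZMod (p ^ n))
    (hC1 : ∃ i, v1 i = 1 ∧ v2 i = 0)
    (hC2 : ∃ i, v1 i = 0 ∧ v2 i = 1)
    (hC3 : ∀ u : ZMod (p ^ n), IsUnit u → ∃ i, v1 i = 1 ∧ v2 i = u)
    (hC4 : ∀ d : ZMod (p ^ n), d ≠ 0 → ¬ IsUnit d → ∃ i, v1 i = 1 ∧ v2 i = d)
    (hC5 : ∀ d : ZMod (p ^ n), d ≠ 0 → ¬ IsUnit d → ∃ i, v1 i = d ∧ v2 i = 1) :
    ∀ c1 c2 c1' c2' : ZMod (p ^ n),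
      c1' • v1 + c2' • v2 ≠ 0 →
      {i | (c1' • v1 + c2' • v2) i ≠ 0} ⊆ {i | (c1 • v1 + c2 • v2) i ≠ 0} →
      ∃ a : ZMod (p ^ n), c1' • v1 + c2' • v2 = a • (c1 • v1 + c2 • v2) := by
  intro c1 c2 c1' c2' hne hsub
  have hz : ∀ i, c1 * v1 i + c2 * v2 i = 0 → c1' * v1 i + c2' * v2 i = 0 := by
    intro i hi
    by_contra h
    exact hsub (show i ∈ {i | (c1' • v1 + c2' • v2) i ≠ 0} by simpa using h) (by simpa using hi)
  have hnz : ¬ (c1 = 0 ∧ c2 = 0) := by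
    rintro ⟨rfl, rfl⟩
    exact hne (funext fun i => by simpa using hz i (by simp))
  have hA : ∀ r, c1 + c2 * r = 0 → c1' + c2' * r = 0 := by
    intro r hr
    obtain ⟨i, h1, h2⟩ : ∃ i, v1 i = 1 ∧ v2 i = r := by
      by_cases hu : IsUnit r
      · exact hC3 r hu
      by_cases h0 : r = 0
      · exact h0 ▸ hC1
      · exact hC4 r h0 hu
    simpa [h1, h2] using hz i (by simpa [h1, h2] using hr)
  have hB : ∀ d, (p : ZMod (p ^ n)) ∣ d → c1 * d + c2 = 0 → c1' * d + c2' = 0 := by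
    intro d hd hr
    obtain ⟨i, h1, h2⟩ : ∃ i, v1 i = d ∧ v2 i = 1 := by
      by_cases h0 : d = 0
      · exact h0 ▸ hC2
      · exact hC5 d h0 ((not_isUnit_iff hp hn d).2 hd)
    simpa [h1, h2] using hz i (by simpa [h1, h2] using hr)
  suffices h : ∃ a, c1' = a * c1 ∧ c2' = a * c2 by
    obtain ⟨a, rfl, rfl⟩ := h
    exact ⟨a, by rw [smul_add, smul_smul, smul_smul]⟩
  clear hz hC1 hC2 hC3 hC4 hC5 hsub hne
  -- The case `c2 ∣ c1` only uses the columns `(1, r)`.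
  have key : c2 ∣ c1 → ∃ a, c1' = a * c1 ∧ c2' = a * c2 := by
    rintro ⟨t, rfl⟩
    have ht := hA (-t) (by ring)
    have hc : c2 ≠ 0 := by
      rintro rfl
      simp at hnz
    obtain ⟨a, ha⟩ : c2 ∣ c2' := dvd_of_annihilator hp hc fun y _ hy => by
      have := hA (y - t) (by linear_combination hy)
      linear_combination this - ht
    exact ⟨a, by linear_combination ht + t * ha, by linear_combination ha⟩
  rcases dvd_total hp c1 c2 with ⟨t, rfl⟩ | h
  · by_cases hu : IsUnit t
    · obtain ⟨u, rfl⟩ := hu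
      exact key ⟨↑u⁻¹, by simp [mul_assoc]⟩
    · have hpt := (not_isUnit_iff hp hn t).1 hu
      have ht := hB (-t) ((dvd_neg).2 hpt) (by ring)
      have hc : c1 ≠ 0 := by
        rintro rfl
        simp at hnz
      obtain ⟨a, ha⟩ : c1 ∣ c1' := dvd_of_annihilator hp hc fun y hy hy0 => by
        have := hB (y - t) (dvd_sub hy hpt) (by linear_combination hy0)
        linear_combination this - ht
      exact ⟨a, by linear_combination ha, by linear_combination ht + t * ha⟩
  · exact key h
end

section
/- Let p be a prime, n ≥ 1, and R = ZMod (p^n). Suppose the pair (v1, v2) of vectors in ι → R contains the standard columns up to unit scalars, i.e.: (C1') there are i and a unit w of R with v1 i = w and v2 i = 0; (C2') there are i and a unit w with v1 i = 0 and v2 i = w; (C3') for every unit u of R there are i and a unit w with v1 i = w and v2 i = w*u; (C4') for every zero divisor d of R there are i and a unit w with v1 i = w and v2 i = w*d; (C5') for every zero divisor d of R there are i and a unit w with v1 i = w*d and v2 i = w. Then the two-dimensional linear code M generated by v1 and v2 is minimal: for all c1, c2, c1', c2' ∈ R, if w' = c1' • v1 + c2' • v2 is nonzero and supp(w') ⊆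 supp(c1 • v1 + c2 • v2), then there exists a ∈ R with w' = a • (c1 • v1 + c2 • v2). -/
/-!
Every element of `ZMod (p ^ n)` is a unit times `p ^ k` with `k ≤ n` (`exists_eq_pow_mul_unit`).
Hence divisibility is total (`dvd_total_zmod`), and if the annihilator of `x` is contained in that
of `y`, then `x ∣ y` (`dvd_of_annihilator_le`).

Up to unit scalars, the columns contain `(1, t)` and `(t, 1)` for all `t`, so the inclusion of
supports says that `c1 + c2 * t = 0` implies `c1' + c2' * t = 0`, and symmetrically. By totality and
symmetry let `c1 = c2 * e`. Testing at `t = -e` gives `c1' = c2' * e`; testing at `t = -e + s` with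
`c2 * s = 0` gives `c2' * s = 0`. Therefore `c2' = c2 * a` for some `a`, and `c1' = c1 * a`
follows (`exists_mul_of_zeros`).
-/

lemma exists_eq_pow_mul_unit {p n : ℕ} (hp : p.Prime) (x : ZMod (p ^ n)) :
    ∃ k ≤ n, ∃ u : ZMod (p ^ n), IsUnit u ∧ x = (p : ZMod (p ^ n)) ^ k * u := by
  have : NeZero (p ^ n) := ⟨pow_ne_zero _ hp.ne_zero⟩
  have hpn : (p : ZMod (p ^ n)) ^ n = 0 := by
    rw [← Nat.cast_pow, ZMod.natCast_self]
  by_cases hx : x = 0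
  · exact ⟨n, le_rfl, 1, isUnit_one, by rw [hx, hpn, zero_mul]⟩
  obtain ⟨m, rfl⟩ := ZMod.natCast_zmod_surjective x
  have hm : m ≠ 0 := by rintro rfl; simp at hx
  obtain ⟨k, q, hq, rfl⟩ := Nat.exists_eq_pow_mul_and_not_dvd hm p hp.ne_one
  refine ⟨k, ?_, (q : ZMod (p ^ n)), ?_, by push_cast; rfl⟩
  · by_contra! hk
    apply hx
    push_cast
    rw [pow_eq_zero_of_le hk.le hpn, zero_mul]
  · rw [ZMod.isUnit_iff_coprime]
    exact (((Nat.Prime.coprime_iff_not_dvd hp).2 hq).pow_left n).symm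

lemma dvd_total_zmod {p n : ℕ} (hp : p.Prime) (x y : ZMod (p ^ n)) : x ∣ y ∨ y ∣ x := by
  obtain ⟨k, -, u, hu, rfl⟩ := exists_eq_pow_mul_unit hp x
  obtain ⟨j, -, v, hv, rfl⟩ := exists_eq_pow_mul_unit hp y
  rw [hu.mul_right_dvd, hv.mul_right_dvd]
  rcases le_total k j with h | h
  · exact Or.inl ((pow_dvd_pow _ h).mul_right _)
  · exact Or.inr ((pow_dvd_pow _ h).mul_right _)

/-- The double annihilator property of `ZMod (p ^ n)`, for principal ideals. -/
lemma dvd_of_annihilator_le {p n : ℕ} (hp : p.Prime) (x y : ZMod (p ^ n))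
    (h : ∀ s, x * s = 0 → y * s = 0) : x ∣ y := by
  obtain ⟨k, hk, u, hu, rfl⟩ := exists_eq_pow_mul_unit hp x
  obtain ⟨j, -, v, hv, rfl⟩ := exists_eq_pow_mul_unit hp y
  have hpn : (p : ZMod (p ^ n)) ^ n = 0 := by
    rw [← Nat.cast_pow, ZMod.natCast_self]
  have h1 := h ((p : ZMod (p ^ n)) ^ (n - k)) (by
    rw [mul_right_comm, ← pow_add, Nat.add_sub_cancel' hk, hpn, zero_mul])
  rw [mul_right_comm, hv.mul_left_eq_zero, ← pow_add, ← Nat.cast_pow,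
    ZMod.natCast_eq_zero_iff, Nat.pow_dvd_pow_iff_le_right hp.one_lt] at h1
  rw [hu.mul_right_dvd]
  exact (pow_dvd_pow _ (by omega)).mul_right _

/-- If `b ∣ a` and every zero of `t ↦ a + b * t` is a zero of `t ↦ a' + b' * t`, then `(a', b')` is
a multiple of `(a, b)`. -/
lemma exists_mul_of_zeros {p n : ℕ} (hp : p.Prime) {a b a' b' : ZMod (p ^ n)} (hab : b ∣ a)
    (h : ∀ t, a + b * t = 0 → a' + b' * t = 0) : ∃ c, a' = c * a ∧ b' = c * b := by
  obtain ⟨e, rfl⟩ := hab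
  have h0 := h (-e) (by ring)
  obtain ⟨c, rfl⟩ := dvd_of_annihilator_le hp b b' fun s hs => by
    have hs' := h (-e + s) (by linear_combination hs)
    linear_combination hs' - h0
  exact ⟨c, by linear_combination h0, mul_comm _ _⟩

/-- If the generator contains the standard columns up to unit scalars
(C1')–(C5'), then the code generated by `v1, v2` over `ZMod (p^n)` is minimal. -/
theorem two_dim_code_minimal_unit_scaled {ι : Type*} [Fintype ι] (p n : ℕ)
    (hp : p.Prime) (hn : 1 ≤ n)
    (v1 v2 : ι → ZMod (p ^ n))
    (hC1 : ∃ i, ∃ w : ZMod (p ^ n), IsUnit w ∧ v1 i = w ∧ v2 i = 0)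
    (hC2 : ∃ i, ∃ w : ZMod (p ^ n), IsUnit w ∧ v1 i = 0 ∧ v2 i = w)
    (hC3 : ∀ u : ZMod (p ^ n), IsUnit u →
      ∃ i, ∃ w : ZMod (p ^ n), IsUnit w ∧ v1 i = w ∧ v2 i = w * u)
    (hC4 : ∀ d : ZMod (p ^ n), d ≠ 0 → ¬ IsUnit d →
      ∃ i, ∃ w : ZMod (p ^ n), IsUnit w ∧ v1 i = w ∧ v2 i = w * d)
    (hC5 : ∀ d : ZMod (p ^ n), d ≠ 0 → ¬ IsUnit d →
      ∃ i, ∃ w : ZMod (p ^ n), IsUnit w ∧ v1 i = w * d ∧ v2 i = w) :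
    ∀ c1 c2 c1' c2' : ZMod (p ^ n),
      c1' • v1 + c2' • v2 ≠ 0 →
      {i | (c1' • v1 + c2' • v2) i ≠ 0} ⊆ {i | (c1 • v1 + c2 • v2) i ≠ 0} →
      ∃ a : ZMod (p ^ n), c1' • v1 + c2' • v2 = a • (c1 • v1 + c2 • v2) := by
  intro c1 c2 c1' c2' _ hsub
  have key : ∀ i, c1 * v1 i + c2 * v2 i = 0 → c1' * v1 i + c2' * v2 i = 0 := by
    intro i hi
    by_contra hne
    exact hsub (a := i) hne hi
  have col1 : ∀ t, ∃ i, ∃ w : ZMod (p ^ n), IsUnit w ∧ v1 i = w ∧ v2 i = w * t := by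
    intro t
    by_cases ht : IsUnit t
    · exact hC3 t ht
    by_cases h0 : t = 0
    · simpa [h0] using hC1
    · exact hC4 t h0 ht
  have col2 : ∀ t, ∃ i, ∃ w : ZMod (p ^ n), IsUnit w ∧ v1 i = w * t ∧ v2 i = w := by
    intro t
    by_cases ht : IsUnit t
    · obtain ⟨u, rfl⟩ := ht
      -- For a unit `u`, the column `(w, w * u⁻¹)` is `w * u⁻¹` times `(u, 1)`.
      obtain ⟨i, w, hw, h1, h2⟩ := hC3 _ (u⁻¹).isUnit
      exact ⟨i, w * ↑u⁻¹, hw.mul (u⁻¹).isUnit, by simp [h1], h2⟩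
    by_cases h0 : t = 0
    · simpa [h0] using hC2
    · exact hC5 t h0 ht
  have zeros1 : ∀ t, c1 + c2 * t = 0 → c1' + c2' * t = 0 := by
    intro t ht
    obtain ⟨i, w, hw, h1, h2⟩ := col1 t
    have := key i (by rw [h1, h2]; linear_combination w * ht)
    rw [h1, h2] at this
    exact hw.mul_right_eq_zero.1 (by linear_combination this)
  have zeros2 : ∀ t, c2 + c1 * t = 0 → c2' + c1' * t = 0 := by
    intro t ht
    obtain ⟨i, w, hw, h1, h2⟩ := col2 t
    have := key i (by rw [h1, h2]; linear_combination w * ht)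
    rw [h1, h2] at this
    exact hw.mul_right_eq_zero.1 (by linear_combination this)
  obtain ⟨a, ha1, ha2⟩ : ∃ a, c1' = a * c1 ∧ c2' = a * c2 := by
    rcases dvd_total_zmod hp c2 c1 with h | h
    · exact exists_mul_of_zeros hp h zeros1
    · obtain ⟨a, h2, h1⟩ := exists_mul_of_zeros hp h zeros2
      exact ⟨a, h1, h2⟩
  exact ⟨a, by rw [ha1, ha2, smul_add, smul_smul, smul_smul]⟩
end

section
/- Let p be a prime, n ≥ 1, and R = ZMod (p^n). Suppose the pair (v1, v2) of vectors in ι → R satisfies the column conditions (C2)–(C5), but no column of type (1,0) is present, i.e. there is no index i such that v1 i is a unit and v2 i = 0. Then the code M generated by v1 and v2 is not minimal: there exist codewords w, w' ∈ M with w' ≠ 0, supp(w') ⊆ supp(w), and w' ≠ a • w for every a ∈ R. -/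
/-!
The witnesses are `w = v2` and `w' = p ^ (n - 1) • v1`. Multiplication by `p ^ (n - 1)` kills every
non-unit of `ZMod (p ^ n)`, so `w'` is supported on the coordinates where `v1` is a unit, and there
`v2` cannot vanish because columns of type `(1, 0)` are absent. The column `(1, 1)` shows `w' ≠ 0`,
and the column `(0, 1)` forces `a = 0` in any relation `w' = a • w`.
-/

theorem isUnit_of_pow_pred_mul_ne_zero {p n : ℕ} (hp : p.Prime) (hn : 1 ≤ n) (x : ZMod (p ^ n))
    (hx : (p : ZMod (p ^ n)) ^ (n - 1) * x ≠ 0) : IsUnit x := by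
  have : NeZero (p ^ n) := ⟨pow_ne_zero _ hp.ne_zero⟩
  rw [← ZMod.natCast_zmod_val x] at hx ⊢
  rw [ZMod.isUnit_iff_coprime]
  refine Nat.Coprime.pow_right n (Nat.Coprime.symm (hp.coprime_iff_not_dvd.2 ?_))
  rintro ⟨k, hk⟩
  apply hx
  rw [hk, Nat.cast_mul, ← mul_assoc, ← pow_succ, Nat.sub_add_cancel hn, ← Nat.cast_pow,
    ZMod.natCast_self, zero_mul]

theorem pow_pred_ne_zero {p n : ℕ} (hp : p.Prime) (hn : 1 ≤ n) :
    (p : ZMod (p ^ n)) ^ (n - 1) ≠ 0 := by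
  rw [← Nat.cast_pow, Ne, ZMod.natCast_eq_zero_iff, Nat.pow_dvd_pow_iff_le_right hp.one_lt]
  omega

/-- If (C2)–(C5) hold but no column of type `(1,0)` (up to unit scalar)
is present, then the code generated by `v1, v2` is not minimal. -/
theorem not_minimal_without_e1 {ι : Type*} [Fintype ι] (p n : ℕ) (hp : p.Prime) (hn : 1 ≤ n)
    (v1 v2 : ι → ZMod (p ^ n))
    (hC2 : ∃ i, v1 i = 0 ∧ v2 i = 1)
    (hC3 : ∀ u : ZMod (p ^ n), IsUnit u → ∃ i, v1 i = 1 ∧ v2 i = u)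
    (hC4 : ∀ d : ZMod (p ^ n), d ≠ 0 → ¬ IsUnit d → ∃ i, v1 i = 1 ∧ v2 i = d)
    (hC5 : ∀ d : ZMod (p ^ n), d ≠ 0 → ¬ IsUnit d → ∃ i, v1 i = d ∧ v2 i = 1)
    (hno : ¬ ∃ i, IsUnit (v1 i) ∧ v2 i = 0) :
    ∃ c1 c2 c1' c2' : ZMod (p ^ n),
      c1' • v1 + c2' • v2 ≠ 0 ∧
      {i | (c1' • v1 + c2' • v2) i ≠ 0} ⊆ {i | (c1 • v1 + c2 • v2) i ≠ 0} ∧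
      ∀ a : ZMod (p ^ n), c1' • v1 + c2' • v2 ≠ a • (c1 • v1 + c2 • v2) := by
  obtain ⟨i, hi1, hi2⟩ := hC2
  obtain ⟨j, hj1, -⟩ := hC3 1 isUnit_one
  have hq := pow_pred_ne_zero hp hn
  refine ⟨0, 1, (p : ZMod (p ^ n)) ^ (n - 1), 0, fun h => ?_, fun k hk => ?_, fun a h => ?_⟩
  · have := congrFun h j
    apply hq
    simpa only [zero_smul, add_zero, Pi.smul_apply, Pi.zero_apply, smul_eq_mul, hj1,
      mul_one] using this
  · have hk' : (p : ZMod (p ^ n)) ^ (n - 1) * v1 k ≠ 0 := by simpa using hk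
    have hu := isUnit_of_pow_pred_mul_ne_zero hp hn _ hk'
    have hv : v2 k ≠ 0 := fun h0 => hno ⟨k, hu, h0⟩
    simpa using hv
  · have ha : a = 0 := by simpa [hi1, hi2, eq_comm] using congrFun h i
    have := congrFun h j
    apply hq
    simpa only [ha, zero_smul, add_zero, Pi.smul_apply, Pi.zero_apply, smul_eq_mul, hj1,
      mul_one, zero_mul] using this
end

section
/- Let p be a prime, n ≥ 1, and R = ZMod (p^n). Suppose the pair (v1, v2) of vectors in ι → R satisfies the column conditions (C1), (C3), (C4), (C5), but no column of type (0,1) is present, i.e. there is no index i such that v1 i = 0 and v2 i is a unit. Then the code M generated by v1 and v2 is not minimal: there exist codewords w, w' ∈ M with w' ≠ 0, supp(w') ⊆ supp(w), and w' ≠ a • w for every a ∈ R. -/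
/-!
The witnesses are `w = v1` and `w' = p ^ (n - 1) • v2`. Where `v1` vanishes, `v2` is a non-unit,
so it is divisible by `p` and killed by `p ^ (n - 1)`; hence `supp w' ⊆ supp w`. The columns
`(1, 0)` and `(1, 1)` show that `w'` is nonzero and not a multiple of `w`.
-/

/-- If (C1), (C3), (C4), (C5) hold but no column of type `(0,1)` (up to unit
scalar) is present, then the code generated by `v1, v2` is not minimal. -/
theorem not_minimal_without_e2 {ι : Type*} [Fintype ι] (p n : ℕ) (hp : p.Prime) (hn : 1 ≤ n)
    (v1 v2 : ι → ZMod (p ^ n))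
    (hC1 : ∃ i, v1 i = 1 ∧ v2 i = 0)
    (hC3 : ∀ u : ZMod (p ^ n), IsUnit u → ∃ i, v1 i = 1 ∧ v2 i = u)
    (hC4 : ∀ d : ZMod (p ^ n), d ≠ 0 → ¬ IsUnit d → ∃ i, v1 i = 1 ∧ v2 i = d)
    (hC5 : ∀ d : ZMod (p ^ n), d ≠ 0 → ¬ IsUnit d → ∃ i, v1 i = d ∧ v2 i = 1)
    (hno : ¬ ∃ i, v1 i = 0 ∧ IsUnit (v2 i)) :
    ∃ c1 c2 c1' c2' : ZMod (p ^ n),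
      c1' • v1 + c2' • v2 ≠ 0 ∧
      {i | (c1' • v1 + c2' • v2) i ≠ 0} ⊆ {i | (c1 • v1 + c2 • v2) i ≠ 0} ∧
      ∀ a : ZMod (p ^ n), c1' • v1 + c2' • v2 ≠ a • (c1 • v1 + c2 • v2) := by
  have : Fact p.Prime := ⟨hp⟩
  have hs : p ^ n = p ^ (n - 1) * p := by rw [← pow_succ, Nat.sub_add_cancel hn]
  have hs0 : ((p ^ (n - 1) : ℕ) : ZMod (p ^ n)) ≠ 0 := by
    rw [Ne, ZMod.natCast_eq_zero_iff, Nat.pow_dvd_pow_iff_le_right hp.one_lt]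
    omega
  obtain ⟨i, hi1, hi2⟩ := hC1
  obtain ⟨j, hj1, hj2⟩ := hC3 1 isUnit_one
  refine ⟨1, 0, 0, ((p ^ (n - 1) : ℕ) : ZMod (p ^ n)), fun h => ?_, fun k hk hk0 => hk ?_,
    fun a h => ?_⟩
  · exact hs0 (by simpa [hj1, hj2] using congrFun h j)
  · have hv1 : v1 k = 0 := by simpa using hk0
    have hv2 : ¬ IsUnit (v2 k) := fun hu => hno ⟨k, hv1, hu⟩
    -- A non-unit is a multiple of `p`, hence is annihilated by `p ^ (n - 1)`.
    rw [← ZMod.natCast_zmod_val (v2 k), ZMod.isUnit_iff_coprime,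
      Nat.coprime_pow_right_iff hn, Nat.coprime_comm, hp.coprime_iff_not_dvd, not_not] at hv2
    have hz : ((p ^ (n - 1) : ℕ) : ZMod (p ^ n)) * v2 k = 0 := by
      rw [← ZMod.natCast_zmod_val (v2 k), ← Nat.cast_mul, ZMod.natCast_eq_zero_iff]
      conv_lhs => rw [hs]
      exact Nat.mul_dvd_mul_left _ hv2
    simpa [hv1] using hz
  · -- Column `(1, 0)` forces `a = 0`, while column `(1, 1)` forces `a = p ^ (n - 1)`.
    have ha : a = 0 := by simpa [hi1, hi2] using (congrFun h i).symm
    exact hs0 (by simpa [hj1, hj2, ha] using congrFun h j)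
end

section
/- Let p be a prime, n ≥ 1, and R = ZMod (p^n). Suppose the pair (v1, v2) of vectors in ι → R contains the standard columns (C1)–(C5). Then for every k1 ∈ R the codeword k1 • v1 is minimal in the code M generated by v1 and v2: every nonzero codeword w' ∈ M with supp(w') ⊆ supp(k1 • v1) satisfies w' = a • (k1 • v1) for some a ∈ R. -/
/-!
A column `(0, 1)` lies outside the support of `k1 • v1`, which forces `c2' = 0`. On the remaining
codeword `c1' • v1`, the columns with first entry `1` or a zero divisor `d` turn the inclusion of
supports into an inclusion of annihilators: `k1 * d = 0` implies `c1' * d = 0` for every `d`. In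
`ZMod N` this inclusion is equivalent to `k1 ∣ c1'` (`ZMod.dvd_of_annihilator_le`), and the quotient
is the required scalar.
-/

/-- Double annihilator property of principal ideals in `ZMod N`: testing against `d = N / gcd(k, N)`
shows that `gcd(k, N)`, an associate of `k`, divides `c`. -/
lemma ZMod.dvd_of_annihilator_le {N : ℕ} [NeZero N] (k c : ZMod N)
    (h : ∀ d : ZMod N, k * d = 0 → c * d = 0) : k ∣ c := by
  set g := Nat.gcd k.val N
  obtain ⟨m, hm⟩ : g ∣ N := Nat.gcd_dvd_right _ _
  obtain ⟨l, hl⟩ : g ∣ k.val := Nat.gcd_dvd_left _ _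
  have hkm : k * (m : ZMod N) = 0 := by
    rw [← ZMod.natCast_zmod_val k, ← Nat.cast_mul, ZMod.natCast_eq_zero_iff]
    exact ⟨l, by rw [hl, mul_right_comm, ← hm]⟩
  have hcm := h _ hkm
  rw [← ZMod.natCast_zmod_val c, ← Nat.cast_mul, ZMod.natCast_eq_zero_iff] at hcm
  have hm0 : 0 < m := by
    rcases Nat.eq_zero_or_pos m with h0 | h0
    · exact absurd (by rw [hm, h0, mul_zero]) (NeZero.ne N)
    · exact h0
  have hgc : g ∣ c.val := by
    obtain ⟨t, ht⟩ := hcm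
    refine ⟨t, Nat.eq_of_mul_eq_mul_right hm0 ?_⟩
    rw [ht]; nth_rewrite 1 [hm]; ring
  have hkg : k ∣ (g : ZMod N) := by
    have hb := congrArg (Int.cast : ℤ → ZMod N) (Nat.gcd_eq_gcd_ab k.val N)
    push_cast at hb
    rw [ZMod.natCast_zmod_val, ZMod.natCast_self, zero_mul, add_zero] at hb
    exact ⟨_, hb⟩
  have hgcast : (g : ZMod N) ∣ (c.val : ZMod N) := by exact_mod_cast Nat.cast_dvd_cast hgc
  rw [ZMod.natCast_zmod_val] at hgcast
  exact hkg.trans hgcast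

/-- With the standard columns (C1)–(C5), every codeword of the form
`k1 • v1` is minimal in the code generated by `v1, v2`. -/
theorem type1_vectors_minimal {ι : Type*} [Fintype ι] (p n : ℕ) (hp : p.Prime) (hn : 1 ≤ n)
    (v1 v2 : ι → ZMod (p ^ n))
    (hC1 : ∃ i, v1 i = 1 ∧ v2 i = 0)
    (hC2 : ∃ i, v1 i = 0 ∧ v2 i = 1)
    (hC3 : ∀ u : ZMod (p ^ n), IsUnit u → ∃ i, v1 i = 1 ∧ v2 i = u)
    (hC4 : ∀ d : ZMod (p ^ n), d ≠ 0 → ¬ IsUnit d → ∃ i, v1 i = 1 ∧ v2 i = d)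
    (hC5 : ∀ d : ZMod (p ^ n), d ≠ 0 → ¬ IsUnit d → ∃ i, v1 i = d ∧ v2 i = 1) :
    ∀ k1 : ZMod (p ^ n), ∀ c1' c2' : ZMod (p ^ n),
      c1' • v1 + c2' • v2 ≠ 0 →
      {i | (c1' • v1 + c2' • v2) i ≠ 0} ⊆ {i | (k1 • v1) i ≠ 0} →
      ∃ a : ZMod (p ^ n), c1' • v1 + c2' • v2 = a • (k1 • v1) := by
  intro k1 c1' c2' _ hsub
  have : NeZero (p ^ n) := ⟨pow_ne_zero _ hp.ne_zero⟩
  have hzero : ∀ i, k1 * v1 i = 0 → c1' * v1 i + c2' * v2 i = 0 := by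
    intro i hi
    by_contra hne
    exact hsub (a := i) hne hi
  have hc2 : c2' = 0 := by
    obtain ⟨i, h1, h2⟩ := hC2
    simpa [h1, h2] using hzero i
  subst hc2
  have hann : ∀ d, k1 * d = 0 → c1' * d = 0 := by
    intro d hd
    by_cases hd0 : d = 0
    · rw [hd0, mul_zero]
    by_cases hu : IsUnit d
    · have hk : k1 = 0 := hu.mul_left_eq_zero.mp hd
      obtain ⟨i, h1, -⟩ := hC1
      have hc1 : c1' = 0 := by simpa [h1, hk] using hzero i
      rw [hc1, zero_mul]
    · obtain ⟨i, h1, -⟩ := hC5 d hd0 hu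
      simpa [h1, hd] using hzero i
  obtain ⟨a, ha⟩ := ZMod.dvd_of_annihilator_le k1 c1' hann
  refine ⟨a, ?_⟩
  rw [zero_smul, add_zero, smul_smul, ha, mul_comm]
end

section
/- Let p be a prime, n ≥ 1, and R = ZMod (p^n). Suppose the pair (v1, v2) of vectors in ι → R contains the standard columns (C1)–(C5). Then for every unit u of R and every k3 ∈ R, the codeword k3 • (v1 + u • v2) is minimal in the code M generated by v1 and v2: every nonzero codeword w' ∈ M with supp(w') ⊆ supp(k3 • (v1 + u • v2)) satisfies w' = a • (k3 • (v1 + u • v2)) for some a ∈ R. -/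
/-!
Evaluating at the column `(1, -u⁻¹)`, where `k3 • (v1 + u • v2)` vanishes, forces `c2' = u * c1'`,
so the second codeword is `c1' • (v1 + u • v2)` and it remains to see that `k3 ∣ c1'`.
The columns `(1, x)` occur for every `x`, and `1 + u * x` takes every value `t` of the ring, so
the inclusion of supports says that the annihilator of `k3` is contained in that of `c1'`.
In `ZMod N` this implies divisibility (`ZMod.dvd_of_annihilator_le`).
-/

/-- Principal ideals of `ZMod N` are determined by their annihilators: testing the hypothesis on
`t = N / gcd(a, N)` shows `gcd(a, N) ∣ b`, and `gcd(a, N)` is a multiple of `a` by Bézout. -/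
theorem ZMod.dvd_of_annihilator_le_s9 {N : ℕ} [NeZero N] (a b : ZMod N)
    (h : ∀ t : ZMod N, a * t = 0 → b * t = 0) : a ∣ b := by
  obtain ⟨q, hq⟩ := Nat.gcd_dvd_right a.val N
  obtain ⟨r, hr⟩ := Nat.gcd_dvd_left a.val N
  set g := Nat.gcd a.val N
  have hq0 : 0 < q := Nat.pos_of_ne_zero fun h0 => NeZero.ne N (by rw [hq, h0, mul_zero])
  have hgb : g ∣ b.val := by
    have haq : a * (q : ZMod N) = 0 := by
      rw [← ZMod.natCast_zmod_val a, ← Nat.cast_mul, ZMod.natCast_eq_zero_iff]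
      exact ⟨r, by linear_combination q * hr - r * hq⟩
    have hbq := h _ haq
    rw [← ZMod.natCast_zmod_val b, ← Nat.cast_mul, ZMod.natCast_eq_zero_iff] at hbq
    apply Nat.dvd_of_mul_dvd_mul_right hq0
    rwa [← hq]
  have hag : a ∣ (g : ZMod N) := by
    have hbez := congrArg (Int.cast : ℤ → ZMod N) (Nat.gcd_eq_gcd_ab a.val N)
    push_cast at hbez
    rw [ZMod.natCast_zmod_val, ZMod.natCast_self, zero_mul, add_zero] at hbez
    exact ⟨_, hbez⟩
  obtain ⟨s, hs⟩ := hgb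
  rw [← ZMod.natCast_zmod_val b, hs, Nat.cast_mul]
  exact hag.mul_right _

/-- With the standard columns (C1)–(C5), for every unit `u`, every codeword of
the form `k3 • (v1 + u • v2)` is minimal in the code generated by `v1, v2`. -/
theorem type3_vectors_minimal {ι : Type*} [Fintype ι] (p n : ℕ) (hp : p.Prime) (hn : 1 ≤ n)
    (v1 v2 : ι → ZMod (p ^ n))
    (hC1 : ∃ i, v1 i = 1 ∧ v2 i = 0)
    (hC2 : ∃ i, v1 i = 0 ∧ v2 i = 1)
    (hC3 : ∀ u : ZMod (p ^ n), IsUnit u → ∃ i, v1 i = 1 ∧ v2 i = u)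
    (hC4 : ∀ d : ZMod (p ^ n), d ≠ 0 → ¬ IsUnit d → ∃ i, v1 i = 1 ∧ v2 i = d)
    (hC5 : ∀ d : ZMod (p ^ n), d ≠ 0 → ¬ IsUnit d → ∃ i, v1 i = d ∧ v2 i = 1) :
    ∀ u : ZMod (p ^ n), IsUnit u → ∀ k3 : ZMod (p ^ n), ∀ c1' c2' : ZMod (p ^ n),
      c1' • v1 + c2' • v2 ≠ 0 →
      {i | (c1' • v1 + c2' • v2) i ≠ 0} ⊆ {i | (k3 • (v1 + u • v2)) i ≠ 0} →
      ∃ a : ZMod (p ^ n), c1' • v1 + c2' • v2 = a • (k3 • (v1 + u • v2)) := by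
  intro u hu k c1 c2 _ hsub
  have : NeZero (p ^ n) := ⟨pow_ne_zero n hp.ne_zero⟩
  have hcol : ∀ x : ZMod (p ^ n), ∃ i, v1 i = 1 ∧ v2 i = x := by
    intro x
    by_cases hx : IsUnit x
    · exact hC3 x hx
    · by_cases hx0 : x = 0
      · rw [hx0]; exact hC1
      · exact hC4 x hx0 hx
  have hzero : ∀ x : ZMod (p ^ n), k * (1 + u * x) = 0 → c1 + c2 * x = 0 := by
    intro x hx
    obtain ⟨i, h1, h2⟩ := hcol x
    by_contra hne
    have hi : i ∈ {i | (c1 • v1 + c2 • v2) i ≠ 0} := by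
      simpa [h1, h2] using hne
    have hk := hsub hi
    simp only [Set.mem_ofPred_eq, Pi.smul_apply, Pi.add_apply, smul_eq_mul, h1, h2] at hk
    exact hk hx
  obtain ⟨w, hw⟩ := hu.exists_right_inv
  have hc2 : c2 = u * c1 := by
    have h0 := hzero (-w) (by linear_combination (-k) * hw)
    linear_combination (-c2) * hw - u * h0
  have hdvd : k ∣ c1 := by
    apply ZMod.dvd_of_annihilator_le_s9
    intro t ht
    -- `x = u⁻¹ (t - 1)` solves `1 + u * x = t`.
    have h0 := hzero (w * (t - 1)) (by linear_combination ht + k * (t - 1) * hw)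
    rw [hc2] at h0
    linear_combination h0 - c1 * (t - 1) * hw
  obtain ⟨a, ha⟩ := hdvd
  refine ⟨a, ?_⟩
  ext i
  simp only [Pi.smul_apply, Pi.add_apply, smul_eq_mul, hc2, ha]
  ring
end

section
/- Let p be a prime, n ≥ 1, and R = ZMod (p^n). Suppose the pair (v1, v2) of vectors in ι → R contains the standard columns (C1)–(C5). Then for every zero divisor d of R and every k4 ∈ R, the codeword k4 • (v1 + d • v2) is minimal in the code M generated by v1 and v2: every nonzero codeword w' ∈ M with supp(w') ⊆ supp(k4 • (v1 + d • v2)) satisfies w' = a • (k4 • (v1 + d • v2)) for some a ∈ R. -/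
/-!
A column `(x, 1)` with `x` a non-unit is always available, by (C2) if `x = 0` and by (C5) otherwise.
Evaluating at `(-d, 1)`, where `k4 • (v1 + d • v2)` vanishes, forces `c2' = c1' * d`, so the smaller
codeword is `c1' • (v1 + d • v2)` and only `k4 ∣ c1'` remains. Evaluating at `(e - d, 1)` for a
nilpotent `e` shows that `k4 * e = 0` implies `c1' * e = 0`. Here `k4 ≠ 0`, as otherwise its support
would be empty. Writing `k4` as a unit times `p ^ m` with `m < n`, the choice `e = p ^ (n - m)` gives
`p ^ m ∣ c1'`, i.e. `k4 ∣ c1'`.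
-/

/-- In `ZMod (p ^ n)`, divisibility by a nonzero `k` can be tested on the nilpotent annihilators
of `k`. -/
lemma dvd_of_nilpotent_annihilators (p n : ℕ) (hp : p.Prime) (k c : ZMod (p ^ n)) (hk : k ≠ 0)
    (h : ∀ e : ZMod (p ^ n), IsNilpotent e → k * e = 0 → c * e = 0) : k ∣ c := by
  have : NeZero (p ^ n) := ⟨pow_ne_zero _ hp.ne_zero⟩
  have hkv : k.val ≠ 0 := by simpa [ZMod.val_eq_zero] using hk
  obtain ⟨m, t, ht, hmt⟩ := Nat.exists_eq_pow_mul_and_not_dvd hkv p hp.ne_one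
  have hzero : (p : ZMod (p ^ n)) ^ n = 0 := by exact_mod_cast ZMod.natCast_self (p ^ n)
  have hkeq : k = (p : ZMod (p ^ n)) ^ m * t := by
    rw [← ZMod.natCast_zmod_val k, hmt]
    push_cast
    rfl
  have hm : m < n := by
    by_contra! hle
    exact hk (by rw [hkeq, pow_eq_zero_of_le hle hzero, zero_mul])
  have htu : IsUnit (t : ZMod (p ^ n)) :=
    (ZMod.isUnit_iff_coprime t (p ^ n)).2 (((hp.coprime_iff_not_dvd.2 ht).symm).pow_right n)
  have hpm : (p : ZMod (p ^ n)) ^ m * (p : ZMod (p ^ n)) ^ (n - m) = 0 := by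
    rw [← pow_add, Nat.add_sub_cancel' hm.le, hzero]
  have hce : c * (p : ZMod (p ^ n)) ^ (n - m) = 0 := by
    refine h _ (IsNilpotent.pow_of_pos ⟨n, hzero⟩ (by lia)) ?_
    rw [hkeq, mul_right_comm, hpm, zero_mul]
  have hdvd : p ^ n ∣ c.val * p ^ (n - m) := by
    rw [← ZMod.natCast_eq_zero_iff]
    push_cast
    rwa [ZMod.natCast_zmod_val]
  have hdvd' : p ^ m ∣ c.val := by
    refine Nat.dvd_of_mul_dvd_mul_right (pow_pos hp.pos (n - m)) ?_
    rwa [← pow_add, Nat.add_sub_cancel' hm.le]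
  rw [hkeq, htu.mul_right_dvd]
  obtain ⟨s, hs⟩ := hdvd'
  refine ⟨s, ?_⟩
  rw [← ZMod.natCast_zmod_val c, hs]
  push_cast
  rfl

/-- With the standard columns (C1)–(C5), for every zero divisor `d`, every
codeword of the form `k4 • (v1 + d • v2)` is minimal in the code generated by `v1, v2`. -/
theorem type4_vectors_minimal {ι : Type*} [Fintype ι] (p n : ℕ) (hp : p.Prime) (hn : 1 ≤ n)
    (v1 v2 : ι → ZMod (p ^ n))
    (hC1 : ∃ i, v1 i = 1 ∧ v2 i = 0)
    (hC2 : ∃ i, v1 i = 0 ∧ v2 i = 1)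
    (hC3 : ∀ u : ZMod (p ^ n), IsUnit u → ∃ i, v1 i = 1 ∧ v2 i = u)
    (hC4 : ∀ d : ZMod (p ^ n), d ≠ 0 → ¬ IsUnit d → ∃ i, v1 i = 1 ∧ v2 i = d)
    (hC5 : ∀ d : ZMod (p ^ n), d ≠ 0 → ¬ IsUnit d → ∃ i, v1 i = d ∧ v2 i = 1) :
    ∀ d : ZMod (p ^ n), d ≠ 0 → ¬ IsUnit d → ∀ k4 : ZMod (p ^ n), ∀ c1' c2' : ZMod (p ^ n),
      c1' • v1 + c2' • v2 ≠ 0 →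
      {i | (c1' • v1 + c2' • v2) i ≠ 0} ⊆ {i | (k4 • (v1 + d • v2)) i ≠ 0} →
      ∃ a : ZMod (p ^ n), c1' • v1 + c2' • v2 = a • (k4 • (v1 + d • v2)) := by
  intro d hd0 hdu k c1 c2 hne hsub
  have hcol : ∀ i, k * (v1 i + d * v2 i) = 0 → c1 * v1 i + c2 * v2 i = 0 := by
    intro i hi
    by_contra hcon
    exact hsub (a := i) (by simpa using hcon) (by simpa using hi)
  have hx : ∀ x : ZMod (p ^ n), ¬ IsUnit x → k * (x + d) = 0 → c1 * x + c2 = 0 := by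
    intro x hxu hk
    obtain ⟨i, h1, h2⟩ : ∃ i, v1 i = x ∧ v2 i = 1 := by
      by_cases hx0 : x = 0
      · exact hx0 ▸ hC2
      · exact hC5 x hx0 hxu
    simpa [h1, h2] using hcol i (by simpa [h1, h2] using hk)
  have hc2 : c2 = c1 * d := by
    have := hx (-d) (by simpa using hdu) (by simp)
    linear_combination this
  have hk : k ≠ 0 := by
    rintro rfl
    exact hne (funext fun i => by simpa using hcol i (by simp))
  obtain ⟨a, ha⟩ := dvd_of_nilpotent_annihilators p n hp k c1 hk fun e he hke => by
    have hu : ¬ IsUnit (e - d) := fun hu => hdu <| by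
      -- `-d` is the unit `e - d` plus the nilpotent `-e`
      have := he.neg.isUnit_add_left_of_commute hu (Commute.all _ _)
      rwa [show e - d + -e = -d by ring, IsUnit.neg_iff] at this
    have := hx (e - d) hu (by simpa using hke)
    linear_combination this - hc2
  refine ⟨a, funext fun i => ?_⟩
  simp only [Pi.add_apply, Pi.smul_apply, smul_eq_mul, hc2, ha]
  ring
end
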